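/- arXiv:1603.02660 — 2 statements merged into one kernel-verified Lean document; each statement's English description precedes it below -/
import Mathlib

section
/- Let r ≥ 2 be an integer, let U ⊆ ℂ be open, and let A, B, C, E : ℂ → ℂ be holomorphic on U and satisfy the level-r Ramanujan system on U. Let a, b, c, d ∈ ℂ with ad − bc = 1, and let V ⊆ ℂ be open such that for every s ∈ V one has cs + d ≠ 0 and γ(s) := (as + b)/(cs + d) ∈ U. Define on V the functions Ã(s) = (cs+d)⁻¹·A(γ(s)), B̃(s) = (cs+d)⁻¹·B(γ(s)), C̃(s) = (cs+d)⁻¹·C(γ(s)), and Ẽ(s) = (cs+d)⁻²·E(γ(s)) + (r·i/π)·c·(cs+d)⁻¹. Then (Ã, B̃, C̃, Ẽ) satisfy the level-r Ramanujan system on V. -/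
open Complex

/-- The level-`r` Ramanujan system for functions `A B C E` holomorphic on a set `U ⊆ ℂ`:
`A^{r−2}·A′ = (πi/r)·(A^{r−1}·E + A·(2C^r − A^r))`, `B′ = (πi/r)·B·(E − A²)`,
`C′ = (πi/r)·C·(E + A²)`, and `E′ = (πi/r)·(E² − A⁴)`. -/
def RamanujanSystem (r : ℕ) (U : Set ℂ) (A B C E : ℂ → ℂ) : Prop :=
  DifferentiableOn ℂ A U ∧ DifferentiableOn ℂ B U ∧ DifferentiableOn ℂ C U ∧
    DifferentiableOn ℂ E U ∧
    ∀ z ∈ U,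
      A z ^ (r - 2) * deriv A z =
          (Real.pi : ℂ) * Complex.I / (r : ℂ) *
            (A z ^ (r - 1) * E z + A z * (2 * C z ^ r - A z ^ r)) ∧
      deriv B z = (Real.pi : ℂ) * Complex.I / (r : ℂ) * (B z * (E z - A z ^ 2)) ∧
      deriv C z = (Real.pi : ℂ) * Complex.I / (r : ℂ) * (C z * (E z + A z ^ 2)) ∧
      deriv E z = (Real.pi : ℂ) * Complex.I / (r : ℂ) * (E z ^ 2 - A z ^ 4)

/-- Derivative of the weight-one transform. -/
theorem moebius_aux (a b c d s : ℂ) (hdet : a * d - b * c = 1) (h : c * s + d ≠ 0) :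
    HasDerivAt (fun s : ℂ => (c * s + d)⁻¹) (-c * ((c * s + d)⁻¹) ^ 2) s ∧
    HasDerivAt (fun s : ℂ => (a * s + b) / (c * s + d)) (((c * s + d)⁻¹) ^ 2) s := by
  have h1 : HasDerivAt (fun s : ℂ => c * s + d) c s := by
    simpa using ((hasDerivAt_id s).const_mul c).add_const d
  have h2 : HasDerivAt (fun s : ℂ => a * s + b) a s := by
    simpa using ((hasDerivAt_id s).const_mul a).add_const b
  constructor
  · refine (h1.fun_inv h).congr_deriv ?_
    field_simp
  · refine (h2.fun_div h1 h).congr_deriv ?_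
    field_simp
    linear_combination hdet

/-- Invariance of the level-`r` Ramanujan system under a determinant-one fractional linear
change of variable, with the quasi-modular shift term in the transformed `E`. -/
theorem ramanujanSystem_moebius_invariance
    (r : ℕ) (hr : 2 ≤ r) (U : Set ℂ) (hU : IsOpen U)
    (A B C E : ℂ → ℂ) (hsys : RamanujanSystem r U A B C E)
    (a b c d : ℂ) (hdet : a * d - b * c = 1)
    (V : Set ℂ) (hV : IsOpen V)
    (hmap : ∀ s ∈ V, c * s + d ≠ 0 ∧ (a * s + b) / (c * s + d) ∈ U) :
    RamanujanSystem r V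
      (fun s => (c * s + d)⁻¹ * A ((a * s + b) / (c * s + d)))
      (fun s => (c * s + d)⁻¹ * B ((a * s + b) / (c * s + d)))
      (fun s => (c * s + d)⁻¹ * C ((a * s + b) / (c * s + d)))
      (fun s => ((c * s + d)⁻¹) ^ 2 * E ((a * s + b) / (c * s + d)) +
        ((r : ℂ) * Complex.I / (Real.pi : ℂ)) * c * (c * s + d)⁻¹) := by
  obtain ⟨hA, hB, hC, hE, heq⟩ := hsys
  have hr0 : (r : ℂ) ≠ 0 := by
    have : r ≠ 0 := by omega
    exact_mod_cast this
  have hpi : (Real.pi : ℂ) ≠ 0 := by exact_mod_cast Real.pi_ne_zero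
  have hkm : ((Real.pi : ℂ) * Complex.I / (r : ℂ)) * ((r : ℂ) * Complex.I / (Real.pi : ℂ)) = -1 := by
    field_simp
    exact Complex.I_sq
  have key : ∀ F : ℂ → ℂ, DifferentiableOn ℂ F U → ∀ s ∈ V,
      HasDerivAt (fun s => F ((a * s + b) / (c * s + d)))
        (deriv F ((a * s + b) / (c * s + d)) * ((c * s + d)⁻¹) ^ 2) s := by
    intro F hF s hs
    obtain ⟨h0, hu⟩ := hmap s hs
    have h1 := ((hF _ hu).differentiableAt (hU.mem_nhds hu)).hasDerivAt
    exact h1.comp s (moebius_aux a b c d s hdet h0).2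
  have key1 : ∀ F : ℂ → ℂ, DifferentiableOn ℂ F U → ∀ s ∈ V,
      HasDerivAt (fun s => (c * s + d)⁻¹ * F ((a * s + b) / (c * s + d)))
        (-c * ((c * s + d)⁻¹) ^ 2 * F ((a * s + b) / (c * s + d)) +
          (c * s + d)⁻¹ * (deriv F ((a * s + b) / (c * s + d)) * ((c * s + d)⁻¹) ^ 2)) s :=
    fun F hF s hs => (moebius_aux a b c d s hdet (hmap s hs).1).1.fun_mul (key F hF s hs)
  have key2 : ∀ s ∈ V, HasDerivAt (fun s => ((c * s + d)⁻¹) ^ 2 * E ((a * s + b) / (c * s + d)) +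
        ((r : ℂ) * Complex.I / (Real.pi : ℂ)) * c * (c * s + d)⁻¹) _ s :=
    fun s hs => (((moebius_aux a b c d s hdet (hmap s hs).1).1.fun_pow 2).fun_mul
      (key E hE s hs)).fun_add ((moebius_aux a b c d s hdet (hmap s hs).1).1.const_mul
        (((r : ℂ) * Complex.I / (Real.pi : ℂ)) * c))
  refine ⟨fun s hs => (key1 A hA s hs).differentiableAt.differentiableWithinAt,
    fun s hs => (key1 B hB s hs).differentiableAt.differentiableWithinAt,
    fun s hs => (key1 C hC s hs).differentiableAt.differentiableWithinAt,
    fun s hs => (key2 s hs).differentiableAt.differentiableWithinAt, ?_⟩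
  intro s hs
  obtain ⟨eA, eB, eC, eE⟩ := heq _ (hmap s hs).2
  rw [(key1 A hA s hs).deriv, (key1 B hB s hs).deriv, (key1 C hC s hs).deriv,
    (key2 s hs).deriv, eB, eC, eE]
  obtain ⟨n, rfl⟩ : ∃ n, r = n + 2 := ⟨r - 2, by omega⟩
  have e1 : n + 2 - 2 = n := by omega
  have e2 : n + 2 - 1 = n + 1 := by omega
  rw [e1, e2] at eA ⊢
  clear key key1 key2 heq e1 e2 eB eC eE
  beta_reduce
  generalize (Real.pi : ℂ) * Complex.I / ((n + 2 : ℕ) : ℂ) = k at *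
  generalize ((n + 2 : ℕ) : ℂ) * Complex.I / (Real.pi : ℂ) = m at *
  generalize deriv A ((a * s + b) / (c * s + d)) = dA at *
  generalize A ((a * s + b) / (c * s + d)) = x at *
  generalize B ((a * s + b) / (c * s + d)) = y at *
  generalize C ((a * s + b) / (c * s + d)) = z at *
  generalize E ((a * s + b) / (c * s + d)) = w at *
  generalize (c * s + d)⁻¹ = u at *
  simp only [mul_pow, pow_succ] at eA ⊢
  refine ⟨?_, ?_, ?_, ?_⟩
  · linear_combination u ^ (n + 3) * eA - c * u ^ (n + 2) * x ^ (n + 1) * hkm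
  · linear_combination -(c * u ^ 2 * y) * hkm
  · linear_combination -(c * u ^ 2 * z) * hkm
  · push_cast
    linear_combination -(2 * c * u ^ 3 * w + m * c ^ 2 * u ^ 2) * hkm
end

section
/- Let D ⊆ ℂ be a connected open set containing 0. Suppose f₁, f₂, f₃ : D → ℂ are holomorphic and satisfy the pillowcase WDVV system with f₁(0) = −1/4, f₂(0) = 0, f₃(0) = 0, and suppose g₁, g₂, g₃ : D → ℂ are holomorphic and satisfy g₁′ + 2g₂g₁ = 4g₁g₃, g₂′ + 2g₃g₂ + g₃′ = 2g₁² + 2g₃², g₃′ + g₃² = g₁², with g₁(0) = 1/4, g₂(0) = 0, g₃(0) = 0. Then g₁ = −f₁, g₂ = f₂ + 2f₃, and g₃ = f₃ on D. -/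
open Complex

/-- The pillowcase WDVV system:
`f₁′ + 2f₁f₂ = 0`, `f₂′ + 2f₂f₃ + f₃′ = 0`, `f₃′ + f₃² = f₁²` on a set `U ⊆ ℂ`. -/
def PillowcaseWDVV (U : Set ℂ) (f₁ f₂ f₃ : ℂ → ℂ) : Prop :=
  ∀ z ∈ U,
    deriv f₁ z + 2 * f₁ z * f₂ z = 0 ∧
    deriv f₂ z + 2 * f₂ z * f₃ z + deriv f₃ z = 0 ∧
    deriv f₃ z + f₃ z ^ 2 = f₁ z ^ 2

/-- Uniqueness for linear differential inequalities on connected open subsets of `ℂ`. -/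
lemma eq_zero_of_deriv_bound {E : Type*} [NormedAddCommGroup E] [NormedSpace ℂ E]
    [CompleteSpace E]
    (D : Set ℂ) (hD : IsOpen D) (hconn : IsConnected D) (h0 : (0 : ℂ) ∈ D)
    (F F' : ℂ → E) (k : ℂ → ℝ) (hF : ∀ z ∈ D, HasDerivAt F (F' z) z)
    (hk : ContinuousOn k D) (hb : ∀ z ∈ D, ‖F' z‖ ≤ k z * ‖F z‖) (hF0 : F 0 = 0) :
    ∀ z ∈ D, F z = 0 := by
  have hFd : DifferentiableOn ℂ F D := fun z hz => (hF z hz).differentiableAt.differentiableWithinAt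
  have hA : AnalyticOnNhd ℂ F D := hFd.analyticOnNhd hD
  obtain ⟨r, hr, hrD⟩ := Metric.nhds_basis_closedBall.mem_iff.1 (hD.mem_nhds h0)
  obtain ⟨K, hK⟩ := (isCompact_closedBall (0 : ℂ) r).bddAbove_image (hk.mono hrD)
  have hloc : ∀ z ∈ Metric.closedBall (0 : ℂ) r, F z = 0 := by
    intro z hz
    have hmem : ∀ t ∈ Set.Icc (0 : ℝ) 1, (t : ℂ) * z ∈ Metric.closedBall (0 : ℂ) r := by
      intro t ht
      rw [mem_closedBall_zero_iff] at hz ⊢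
      rw [norm_mul, Complex.norm_real, Real.norm_of_nonneg ht.1]
      nlinarith [ht.1, ht.2, norm_nonneg z]
    have hder : ∀ t ∈ Set.Icc (0 : ℝ) 1,
        HasDerivAt (fun s : ℝ => F ((s : ℂ) * z)) (z • F' ((t : ℂ) * z)) t := by
      intro t ht
      have h1 : HasDerivAt (fun s : ℝ => (s : ℂ) * z) z t := by
        simpa using (Complex.ofRealCLM.hasDerivAt (x := t)).mul_const z
      exact HasDerivAt.scomp t (hF _ (hrD (hmem t ht))) h1
    have := eq_zero_of_abs_deriv_le_mul_abs_self_of_eq_zero_right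
      (f := fun s : ℝ => F ((s : ℂ) * z)) (f' := fun t : ℝ => z • F' ((t : ℂ) * z))
      (K := ‖z‖ * K) (a := 0) (b := 1)
      (fun t ht => (hder t ht).continuousAt.continuousWithinAt)
      (fun t ht => (hder t ⟨ht.1, ht.2.le⟩).hasDerivWithinAt)
      (by simpa using hF0)
      (by
        intro t ht
        have hm := hmem t ⟨ht.1, ht.2.le⟩
        have h2 : k ((t : ℂ) * z) ≤ K := hK (Set.mem_image_of_mem _ hm)
        rw [norm_smul, mul_assoc]
        refine mul_le_mul_of_nonneg_left ?_ (norm_nonneg z)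
        exact (hb _ (hrD hm)).trans (mul_le_mul_of_nonneg_right h2 (norm_nonneg _)))
      1 (by simp)
    simpa using this
  have hev : F =ᶠ[nhds 0] 0 := by
    filter_upwards [Metric.closedBall_mem_nhds (0 : ℂ) hr] with z hz
    exact hloc z hz
  exact fun z hz => hA.eqOn_zero_of_preconnected_of_eventuallyEq_zero hconn.isPreconnected h0 hev hz

lemma norm_row_le (p q r a b c : ℂ) :
    ‖p * a + q * b + r * c‖ ≤ (‖p‖ + ‖q‖ + ‖r‖) * ‖(a, b, c)‖ := by
  have ha : ‖a‖ ≤ ‖(a, b, c)‖ := norm_fst_le (a, b, c)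
  have hbc : ‖(b, c)‖ ≤ ‖(a, b, c)‖ := norm_snd_le (a, b, c)
  have hb : ‖b‖ ≤ ‖(a, b, c)‖ := (norm_fst_le (b, c)).trans hbc
  have hc : ‖c‖ ≤ ‖(a, b, c)‖ := (norm_snd_le (b, c)).trans hbc
  refine (norm_add₃_le).trans ?_
  rw [norm_mul, norm_mul, norm_mul, add_mul, add_mul]
  gcongr

/-- In the FJRW theory of the pillowcase, the narrow genus-zero correlation functions
`g₁, g₂, g₃` are determined by the broad ones `f₁, f₂, f₃` via
`g₁ = −f₁`, `g₂ = f₂ + 2f₃`, `g₃ = f₃`. -/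
theorem pillowcase_narrow_from_broad
    (D : Set ℂ) (hD : IsOpen D) (hconn : IsConnected D) (h0 : (0 : ℂ) ∈ D)
    (f₁ f₂ f₃ g₁ g₂ g₃ : ℂ → ℂ)
    (hf₁ : DifferentiableOn ℂ f₁ D) (hf₂ : DifferentiableOn ℂ f₂ D)
    (hf₃ : DifferentiableOn ℂ f₃ D)
    (hg₁ : DifferentiableOn ℂ g₁ D) (hg₂ : DifferentiableOn ℂ g₂ D)
    (hg₃ : DifferentiableOn ℂ g₃ D)
    (hf : PillowcaseWDVV D f₁ f₂ f₃)
    (hf₁0 : f₁ 0 = -(1 / 4)) (hf₂0 : f₂ 0 = 0) (hf₃0 : f₃ 0 = 0)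
    (hgeq1 : ∀ z ∈ D, deriv g₁ z + 2 * g₂ z * g₁ z = 4 * g₁ z * g₃ z)
    (hgeq2 : ∀ z ∈ D,
      deriv g₂ z + 2 * g₃ z * g₂ z + deriv g₃ z = 2 * g₁ z ^ 2 + 2 * g₃ z ^ 2)
    (hgeq3 : ∀ z ∈ D, deriv g₃ z + g₃ z ^ 2 = g₁ z ^ 2)
    (hg₁0 : g₁ 0 = 1 / 4) (hg₂0 : g₂ 0 = 0) (hg₃0 : g₃ 0 = 0) :
    ∀ z ∈ D, g₁ z = -f₁ z ∧ g₂ z = f₂ z + 2 * f₃ z ∧ g₃ z = f₃ z := by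
  have hda : ∀ {u : ℂ → ℂ}, DifferentiableOn ℂ u D → ∀ z ∈ D, HasDerivAt u (deriv u z) z :=
    fun hu z hz => (hu.differentiableAt (hD.mem_nhds hz)).hasDerivAt
  have c1 := hf₁.continuousOn
  have c2 := hf₂.continuousOn
  have c3 := hf₃.continuousOn
  have d1 := hg₁.continuousOn
  have d2 := hg₂.continuousOn
  have d3 := hg₃.continuousOn
  have key := eq_zero_of_deriv_bound D hD hconn h0
    (fun z => (g₁ z + f₁ z, g₂ z - (f₂ z + 2 * f₃ z), g₃ z - f₃ z))
    (fun z => (deriv g₁ z + deriv f₁ z, deriv g₂ z - (deriv f₂ z + 2 * deriv f₃ z),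
      deriv g₃ z - deriv f₃ z))
    (fun z =>
      (‖4 * g₃ z - 2 * (f₂ z + 2 * f₃ z)‖ + ‖-2 * g₁ z‖ + ‖-4 * f₁ z‖)
      + (‖g₁ z - f₁ z‖ + ‖-2 * f₃ z‖ + ‖3 * (g₃ z + f₃ z) - 2 * g₂ z‖)
      + (‖g₁ z - f₁ z‖ + ‖(0 : ℂ)‖ + ‖-(g₃ z + f₃ z)‖))
    (fun z hz => ((hda hg₁ z hz).add (hda hf₁ z hz)).prodMk
      (((hda hg₂ z hz).sub ((hda hf₂ z hz).add ((hda hf₃ z hz).const_mul 2))).prodMk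
        ((hda hg₃ z hz).sub (hda hf₃ z hz))))
    (by fun_prop)
    (by
      intro z hz
      obtain ⟨e1, e2, e3⟩ := hf z hz
      have k1 := hgeq1 z hz
      have k2 := hgeq2 z hz
      have k3 := hgeq3 z hz
      have r1 := norm_row_le (4 * g₃ z - 2 * (f₂ z + 2 * f₃ z)) (-2 * g₁ z) (-4 * f₁ z)
        (g₁ z + f₁ z) (g₂ z - (f₂ z + 2 * f₃ z)) (g₃ z - f₃ z)
      have r2 := norm_row_le (g₁ z - f₁ z) (-2 * f₃ z) (3 * (g₃ z + f₃ z) - 2 * g₂ z)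
        (g₁ z + f₁ z) (g₂ z - (f₂ z + 2 * f₃ z)) (g₃ z - f₃ z)
      have r3 := norm_row_le (g₁ z - f₁ z) 0 (-(g₃ z + f₃ z))
        (g₁ z + f₁ z) (g₂ z - (f₂ z + 2 * f₃ z)) (g₃ z - f₃ z)
      have s1 : deriv g₁ z + deriv f₁ z = (4 * g₃ z - 2 * (f₂ z + 2 * f₃ z)) * (g₁ z + f₁ z)
          + (-2 * g₁ z) * (g₂ z - (f₂ z + 2 * f₃ z)) + (-4 * f₁ z) * (g₃ z - f₃ z) := by
        linear_combination k1 + e1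
      have s2 : deriv g₂ z - (deriv f₂ z + 2 * deriv f₃ z) = (g₁ z - f₁ z) * (g₁ z + f₁ z)
          + (-2 * f₃ z) * (g₂ z - (f₂ z + 2 * f₃ z))
          + (3 * (g₃ z + f₃ z) - 2 * g₂ z) * (g₃ z - f₃ z) := by
        linear_combination k2 - k3 - e2 - e3
      have s3 : deriv g₃ z - deriv f₃ z = (g₁ z - f₁ z) * (g₁ z + f₁ z)
          + 0 * (g₂ z - (f₂ z + 2 * f₃ z)) + (-(g₃ z + f₃ z)) * (g₃ z - f₃ z) := by
        linear_combination k3 - e3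
      rw [← s1] at r1
      rw [← s2] at r2
      rw [← s3] at r3
      have n1 := (norm_nonneg _).trans r1
      have n2 := (norm_nonneg _).trans r2
      have n3 := (norm_nonneg _).trans r3
      simp only [add_mul _ _ ‖(g₁ z + f₁ z, g₂ z - (f₂ z + 2 * f₃ z), g₃ z - f₃ z)‖]
        at r1 r2 r3 n1 n2 n3 ⊢
      rw [norm_prod_le_iff, norm_prod_le_iff]
      refine ⟨?_, ?_, ?_⟩ <;> dsimp only <;> linarith)
    (by simp [hf₁0, hf₂0, hf₃0, hg₁0, hg₂0, hg₃0])
  intro z hz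
  have h := key z hz
  simp only [Prod.mk_eq_zero] at h
  obtain ⟨h1, h2, h3⟩ := h
  exact ⟨by linear_combination h1, by linear_combination h2, by linear_combination h3⟩
end
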